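/- In the scheduling model with common chunk size X > 0, the backward greedy selection pushes all skips toward chunks of lower index: if S ⊆ {1,…,C} is any feasible set with |S| = |G|, if i_1 < i_2 < … < i_H are the elements of {1,…,C} \\ G (the chunks skipped by the backward greedy) and j_1 < j_2 < … < j_H are the elements of {1,…,C} \\ S, then i_k ≤ j_k for every k = 1,…,H. -/

import Mathlib

/-!
The theorem is equivalent to the statement that, for every `m`, the greedy selection contains at
least as many chunks of index `> m` as any feasible set does.

*Reduction to counting.* With equal sizes and agreeable windows, any schedule may be rearranged in
first-in-first-out order without changing the total amount `F τ` downloaded up to each slot `τ`. So a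
set `S` is feasible iff some `F` has increments bounded by the bandwidth and satisfies
`X · #{d ≤ τ} ≤ F τ ≤ X · min (#{t ≤ τ}, K + #{d ≤ τ})`, where the counts range over `S` and
`K = ⌊B_m / L⌋` is the number of chunks the buffer holds. The largest candidate `F` is obtained
recursively, which turns feasibility into the inequalities between pairs of slots collected in
`HallCond` (`hall_of_feasible`, `feasible_of_hall`).

*Exchange.* If `S` is feasible, agrees with the greedy selection above `g`, misses `g`, and the greedy
selection takes `g`, then the largest element `s < g` of `S` may be replaced by `g`: each
inequality for the new set follows either from that of `S` or from that of the part of the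
greedy selection of index `≥ g` (`hall_exchange`). Iterating downwards turns a feasible subset of
`(m, C]` into the greedy selection on `(m, C]` without decreasing the cardinality
(`exists_agree`).
-/

open scoped Classical

structure SchedModel where
  C : ℕ
  hC : 1 ≤ C
  L : ℝ
  hL : 0 < L
  B : ℕ → ℝ
  hB : ∀ j, 0 ≤ B j
  t : ℕ → ℕ
  d : ℕ → ℕ
  ht : ∀ i, 1 ≤ t i
  htd : ∀ i, t i ≤ d i
  tmono : Monotone t
  dmono : Monotone d
  Bm : ℝ
  hBm : 0 < Bm

/-- A feasible schedule for per-chunk download amounts `X`. -/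
def SchedModel.IsSchedule (M : SchedModel) (X : ℕ → ℝ) (z : ℕ → ℕ → ℝ) : Prop :=
  (∀ i j, 0 ≤ z i j) ∧
  (∀ i j, (j < M.t i ∨ M.d i < j) → z i j = 0) ∧
  (∀ i ∈ Finset.Icc 1 M.C, ∑ j ∈ Finset.Icc 1 (M.d i), z i j = X i) ∧
  (∀ j, ∑ i ∈ Finset.Icc 1 M.C, z i j ≤ M.B j) ∧
  (∀ τ, M.L * (((Finset.Icc 1 M.C).filter
      (fun i => τ < M.d i ∧ 0 < ∑ j ∈ Finset.Icc 1 τ, z i j)).card : ℝ) ≤ M.Bm)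

/-- With common chunk size `X`, a set `S` of chunks is feasible if there is a
schedule downloading amount `X` for every chunk in `S` and `0` otherwise. -/
def SchedModel.FeasibleSet (M : SchedModel) (X : ℝ) (S : Finset ℕ) : Prop :=
  ∃ z : ℕ → ℕ → ℝ, M.IsSchedule (fun i => if i ∈ S then X else 0) z

/-- Backward greedy selection after processing the `k` chunks `C, C−1, …, C−k+1`:
a chunk is added iff the selection so far together with it is feasible. -/
noncomputable def SchedModel.backGreedyAux (M : SchedModel) (X : ℝ) : ℕ → Finset ℕ
  | 0 => ∅
  | k + 1 =>
    let G := M.backGreedyAux X k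
    if M.FeasibleSet X (insert (M.C - k) G) then insert (M.C - k) G else G

/-- The backward greedy selection (chunks processed in decreasing order C,…,1). -/
noncomputable def SchedModel.backGreedy (M : SchedModel) (X : ℝ) : Finset ℕ :=
  M.backGreedyAux X M.C

open Finset

/-! ### Counting and order statistics -/

/-- The number of elements `i` of `S` with `f i ≤ τ`. -/
noncomputable def cnt (f : ℕ → ℕ) (S : Finset ℕ) (τ : ℕ) : ℕ := #{i ∈ S | f i ≤ τ}

/-- The rank (starting from `0`) of `i` in `S`. -/
noncomputable def rk (S : Finset ℕ) (i : ℕ) : ℕ := #{s ∈ S | s < i}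

lemma cnt_mono (f : ℕ → ℕ) (S : Finset ℕ) : Monotone (cnt f S) := by
  intro a b hab
  apply card_le_card
  intro i hi
  simp only [mem_filter] at hi ⊢
  exact ⟨hi.1, hi.2.trans hab⟩

lemma cnt_le_card (f : ℕ → ℕ) (S : Finset ℕ) (τ : ℕ) : cnt f S τ ≤ #S := card_filter_le _ _

lemma sum_rk {α : Type*} [AddCommMonoid α] (f : ℕ → α) (S : Finset ℕ) :
    ∑ i ∈ S, f (rk S i) = ∑ r ∈ range #S, f r := by
  induction S using Finset.induction_on_max with
  | empty => simp
  | insert a S ha ih =>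
    have hna : a ∉ S := fun h => lt_irrefl _ (ha a h)
    rw [sum_insert hna, card_insert_of_notMem hna, sum_range_succ, ← ih, add_comm]
    congr 1
    · apply sum_congr rfl
      intro i hi
      congr 1
      unfold rk
      rw [filter_insert, if_neg (not_lt.2 (ha i hi).le)]
    · congr 1
      unfold rk
      rw [filter_insert, if_neg (lt_irrefl a), filter_true_of_mem ha]

lemma card_rk_lt (S : Finset ℕ) (m : ℕ) : #{i ∈ S | rk S i < m} ≤ m := by
  rw [card_filter, sum_rk (fun r => if r < m then 1 else 0) S, ← card_filter]
  calc _ ≤ #(range m) := card_le_card (by intro r; simp)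
    _ = m := card_range m

lemma cnt_le_rk {f : ℕ → ℕ} (hf : Monotone f) {S : Finset ℕ} {i τ : ℕ} (h : τ < f i) :
    cnt f S τ ≤ rk S i := by
  apply card_le_card
  intro s hs
  simp only [mem_filter] at hs ⊢
  refine ⟨hs.1, ?_⟩
  by_contra hc
  have := hf (not_lt.1 hc)
  omega

lemma rk_lt_cnt {f : ℕ → ℕ} (hf : Monotone f) {S : Finset ℕ} {i τ : ℕ} (hi : i ∈ S)
    (h : f i ≤ τ) : rk S i < cnt f S τ := by
  apply card_lt_card
  rw [ssubset_iff_of_subset]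
  · exact ⟨i, by simp [hi, h], by simp⟩
  · intro s hs
    simp only [mem_filter] at hs ⊢
    exact ⟨hs.1, (hf hs.2.le).trans h⟩

/-- The set with more elements below every threshold has the smaller order statistics. -/
lemma orderIso_le {A B : Finset ℕ} {H : ℕ} (hA : #A = H) (hB : #B = H)
    (h : ∀ v ∈ B, #{x ∈ B | x ≤ v} ≤ #{x ∈ A | x ≤ v}) (k : Fin H) :
    (A.orderIsoOfFin hA k : ℕ) ≤ (B.orderIsoOfFin hB k : ℕ) := by
  by_contra hc
  push Not at hc
  set v : ℕ := (B.orderIsoOfFin hB k : ℕ) with hv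
  have h1 : k.val + 1 ≤ #{x ∈ B | x ≤ v} := by
    have : #((Finset.Iic k).image (fun l => (B.orderIsoOfFin hB l : ℕ))) = k.val + 1 := by
      rw [card_image_of_injective, Fin.card_Iic]
      intro a b hab
      exact (B.orderIsoOfFin hB).injective (Subtype.ext hab)
    rw [← this]
    apply card_le_card
    intro x hx
    simp only [mem_image, mem_Iic, mem_filter] at hx ⊢
    obtain ⟨l, hl, rfl⟩ := hx
    refine ⟨(B.orderIsoOfFin hB l).2, ?_⟩
    exact (B.orderIsoOfFin hB).monotone hl
  have h2 : #{x ∈ A | x ≤ v} ≤ k.val := by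
    calc #{x ∈ A | x ≤ v} ≤ #((Finset.Iio k).image (fun l => (A.orderIsoOfFin hA l : ℕ))) := by
          apply card_le_card
          intro x hx
          simp only [mem_image, mem_Iio, mem_filter] at hx ⊢
          refine ⟨(A.orderIsoOfFin hA).symm ⟨x, hx.1⟩, ?_, by simp⟩
          by_contra hk
          have := (A.orderIsoOfFin hA).monotone (not_lt.1 hk)
          rw [OrderIso.apply_symm_apply] at this
          have h3 : ((A.orderIsoOfFin hA k : ℕ)) ≤ x := this
          omega
      _ ≤ #(Finset.Iio k) := card_image_le
      _ = k.val := by simp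
  have := h v (B.orderIsoOfFin hB k).2
  omega

/-! ### Feasibility as inequalities between pairs of slots -/

namespace SchedModel

variable (M : SchedModel) (X : ℝ)

/-- The number of chunks that fit into the buffer. -/
noncomputable def bufCap : ℕ := ⌊M.Bm / M.L⌋₊

/-- Total bandwidth of the slots `1, …, τ`. -/
noncomputable def cumB (τ : ℕ) : ℝ := ∑ j ∈ Icc 1 τ, M.B j

/-- The Hall-type condition equivalent to feasibility of `S`: between slots `a` and `b` there is
enough bandwidth to pass from the largest amount that may have been downloaded by `a` to the least
amount that must have been downloaded by `b`. -/
def HallCond (S : Finset ℕ) : Prop :=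
  ∀ a b, a ≤ b →
    X * cnt M.d S b ≤ X * cnt M.t S a + (M.cumB b - M.cumB a) ∧
    X * cnt M.d S b ≤ X * (M.bufCap + cnt M.d S a) + (M.cumB b - M.cumB a)

lemma buffer_iff (n : ℕ) : M.L * (n : ℝ) ≤ M.Bm ↔ n ≤ M.bufCap := by
  unfold bufCap
  rw [Nat.le_floor_iff (div_nonneg M.hBm.le M.hL.le), le_div_iff₀' M.hL]

lemma cumB_succ (τ : ℕ) : M.cumB (τ + 1) = M.cumB τ + M.B (τ + 1) := by
  unfold cumB
  rw [sum_Icc_succ_top (by omega)]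

variable {M X}

lemma hall_of_feasible (hX : 0 < X) {S : Finset ℕ} (hS : S ⊆ Icc 1 M.C)
    (h : M.FeasibleSet X S) : M.HallCond X S := by
  obtain ⟨z, hz0, hzw, hzX, hzB, hzbuf⟩ := h
  set c : ℕ → ℕ → ℝ := fun i τ => ∑ j ∈ Icc 1 τ, z i j with hc
  have hc0 : ∀ i τ, 0 ≤ c i τ := fun i τ => sum_nonneg fun j _ => hz0 i j
  have hcd : ∀ i ∈ S, ∀ τ, M.d i ≤ τ → c i τ = X := by
    intro i hi τ hτ
    have h1 := hzX i (hS hi)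
    simp only [if_pos hi] at h1
    rw [← h1]
    symm
    apply sum_subset (Icc_subset_Icc_right hτ)
    intro j hj hj'
    apply hzw
    simp only [mem_Icc] at hj hj'
    omega
  have hcX : ∀ i ∈ S, ∀ τ, c i τ ≤ X := by
    intro i hi τ
    rw [← hcd i hi (max τ (M.d i)) (le_max_right _ _)]
    exact sum_le_sum_of_subset_of_nonneg (Icc_subset_Icc_right (le_max_left _ _))
      fun j _ _ => hz0 i j
  have hct : ∀ i τ, τ < M.t i → c i τ = 0 := by
    intro i τ hτ
    apply sum_eq_zero
    intro j hj
    apply hzw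
    simp only [mem_Icc] at hj
    omega
  have hlo : ∀ τ, X * cnt M.d S τ ≤ ∑ i ∈ S, c i τ := by
    intro τ
    unfold cnt
    rw [card_filter, Nat.cast_sum, mul_sum]
    apply sum_le_sum
    intro i hi
    split_ifs with hd
    · simp [hcd i hi τ hd]
    · simp [hc0]
  have hut : ∀ τ, ∑ i ∈ S, c i τ ≤ X * cnt M.t S τ := by
    intro τ
    unfold cnt
    rw [card_filter, Nat.cast_sum, mul_sum]
    apply sum_le_sum
    intro i hi
    split_ifs with hd
    · simp [hcX i hi τ]
    · simp [hct i τ (not_le.1 hd)]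
  have hud : ∀ τ, ∑ i ∈ S, c i τ ≤ X * (M.bufCap + cnt M.d S τ) := by
    intro τ
    have hb := (M.buffer_iff _).1 (hzbuf τ)
    have h1 : #{i ∈ S | τ < M.d i ∧ 0 < c i τ} ≤ M.bufCap :=
      (card_le_card (filter_subset_filter _ hS)).trans hb
    have h2 : ∑ i ∈ S, c i τ ≤
        X * (#{i ∈ S | τ < M.d i ∧ 0 < c i τ} + cnt M.d S τ) := by
      unfold cnt
      rw [card_filter, card_filter, ← Nat.cast_add, ← sum_add_distrib, Nat.cast_sum, mul_sum]
      apply sum_le_sum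
      intro i hi
      have h3 := hcX i hi τ
      by_cases hd : M.d i ≤ τ
      · simp [hd, not_lt.2 hd, h3]
      · by_cases hp : 0 < c i τ
        · simp [hd, not_le.1 hd, hp, h3]
        · simp [hd, hp, not_lt.1 hp]
    refine h2.trans ?_
    have : (#{i ∈ S | τ < M.d i ∧ 0 < c i τ} : ℝ) ≤ M.bufCap := by exact_mod_cast h1
    gcongr
  have hinc : ∀ a b, a ≤ b → ∑ i ∈ S, c i b ≤ ∑ i ∈ S, c i a + (M.cumB b - M.cumB a) := by
    intro a b hab
    induction b, hab using Nat.le_induction with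
    | base => simp
    | succ b hab ih =>
      rw [cumB_succ]
      have h1 : ∑ i ∈ S, c i (b + 1) = ∑ i ∈ S, c i b + ∑ i ∈ S, z i (b + 1) := by
        rw [← sum_add_distrib]
        apply sum_congr rfl
        intro i _
        simp only [hc]
        rw [sum_Icc_succ_top (by omega)]
      have h2 : ∑ i ∈ S, z i (b + 1) ≤ M.B (b + 1) :=
        (sum_le_sum_of_subset_of_nonneg hS fun i _ _ => hz0 i _).trans (hzB _)
      linarith
  intro a b hab
  have h1 := hinc a b hab
  have h2 := hlo b
  exact ⟨by linarith [hut a], by linarith [hud a]⟩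

/-- Amount, out of a total of `F` downloaded first-in-first-out, that goes to the chunk of
rank `r`. -/
noncomputable def fifo (X F : ℝ) (r : ℕ) : ℝ := min X (max 0 (F - r * X))

lemma fifo_nonneg (hX : 0 < X) (F : ℝ) (r : ℕ) : 0 ≤ fifo X F r :=
  le_min hX.le (le_max_left _ _)

lemma fifo_mono {F F' : ℝ} (h : F ≤ F') (r : ℕ) : fifo X F r ≤ fifo X F' r := by
  unfold fifo; gcongr

lemma fifo_eq_zero (hX : 0 < X) {F : ℝ} {r : ℕ} (h : F ≤ r * X) : fifo X F r = 0 := by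
  unfold fifo
  rw [max_eq_left (by linarith), min_eq_right hX.le]

lemma fifo_eq_self (hX : 0 < X) {F : ℝ} {r : ℕ} (h : (r + 1) * X ≤ F) : fifo X F r = X := by
  unfold fifo
  rw [max_eq_right (by linarith), min_eq_left (by linarith)]

lemma sum_fifo (hX : 0 < X) {F : ℝ} (hF : 0 ≤ F) (n : ℕ) :
    ∑ r ∈ range n, fifo X F r = min F (n * X) := by
  induction n with
  | zero => simp [hF]
  | succ n ih =>
    rw [sum_range_succ, ih]
    push_cast
    rcases le_total F (n * X) with h | h
    · rw [fifo_eq_zero hX h, min_eq_left h, min_eq_left (by linarith), add_zero]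
    · rw [min_eq_right h]
      unfold fifo
      rw [max_eq_right (by linarith)]
      rcases le_total X (F - n * X) with h' | h'
      · rw [min_eq_left h', min_eq_right (by linarith)]; ring
      · rw [min_eq_right h', min_eq_left (by linarith)]; ring

variable (M X) in
/-- Upper bound for the total amount downloaded up to slot `τ`. -/
noncomputable def upper (S : Finset ℕ) (τ : ℕ) : ℝ :=
  min (X * cnt M.t S τ) (X * (M.bufCap + cnt M.d S τ))

variable (M X) in
/-- The largest cumulative download respecting `upper` and the bandwidth. -/
noncomputable def maxCum (S : Finset ℕ) : ℕ → ℝ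
  | 0 => 0
  | τ + 1 => min (maxCum S τ + M.B (τ + 1)) (upper M X S (τ + 1))

lemma upper_mono (hX : 0 < X) (S : Finset ℕ) : Monotone (upper M X S) := by
  intro a b hab
  have h1 : (cnt M.t S a : ℝ) ≤ cnt M.t S b := by exact_mod_cast cnt_mono M.t S hab
  have h2 : (cnt M.d S a : ℝ) ≤ cnt M.d S b := by exact_mod_cast cnt_mono M.d S hab
  unfold upper
  gcongr

lemma upper_zero (hX : 0 < X) (S : Finset ℕ) : upper M X S 0 = 0 := by
  have : cnt M.t S 0 = 0 := by
    unfold cnt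
    rw [card_eq_zero, filter_eq_empty_iff]
    intro i _
    have := M.ht i
    omega
  unfold upper
  rw [this]
  simp only [Nat.cast_zero, mul_zero]
  exact min_eq_left (by positivity)

lemma maxCum_le_upper (hX : 0 < X) (S : Finset ℕ) (τ : ℕ) : maxCum M X S τ ≤ upper M X S τ := by
  cases τ with
  | zero => rw [upper_zero hX]; rfl
  | succ τ => exact min_le_right _ _

lemma maxCum_mono (hX : 0 < X) (S : Finset ℕ) : Monotone (maxCum M X S) := by
  apply monotone_nat_of_le_succ
  intro τ
  refine le_min ?_ ?_
  · linarith [M.hB (τ + 1)]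
  · exact (maxCum_le_upper hX S τ).trans (upper_mono hX S (Nat.le_succ τ))

/-- The value of `maxCum` is attained by saturating the bandwidth since some slot `a` at which the
upper bound was tight. -/
lemma exists_maxCum_eq (hX : 0 < X) (S : Finset ℕ) (τ : ℕ) :
    ∃ a ≤ τ, maxCum M X S τ = upper M X S a + (M.cumB τ - M.cumB a) := by
  induction τ with
  | zero => exact ⟨0, le_rfl, by simp [upper_zero hX, maxCum]⟩
  | succ τ ih =>
    obtain ⟨a, ha, h⟩ := ih
    rcases min_choice (maxCum M X S τ + M.B (τ + 1)) (upper M X S (τ + 1)) with h' | h'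
    · refine ⟨a, by omega, ?_⟩
      rw [maxCum, h', h, cumB_succ]
      ring
    · refine ⟨τ + 1, le_rfl, ?_⟩
      rw [maxCum, h']
      ring

lemma le_maxCum (hX : 0 < X) {S : Finset ℕ} (h : M.HallCond X S) (τ : ℕ) :
    X * cnt M.d S τ ≤ maxCum M X S τ := by
  obtain ⟨a, ha, h'⟩ := exists_maxCum_eq (M := M) hX S τ
  rw [h', upper, ← sub_le_iff_le_add, le_min_iff]
  obtain ⟨h1, h2⟩ := h a τ ha
  exact ⟨by linarith, by linarith⟩

lemma feasible_of_hall (hX : 0 < X) {S : Finset ℕ} (hS : S ⊆ Icc 1 M.C)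
    (h : M.HallCond X S) : M.FeasibleSet X S := by
  set F := maxCum M X S with hF
  have hF0 : F 0 = 0 := rfl
  have hFm : Monotone F := maxCum_mono hX S
  have hFn : ∀ τ, 0 ≤ F τ := fun τ => hF0 ▸ hFm (Nat.zero_le τ)
  have hFt : ∀ τ, F τ ≤ X * cnt M.t S τ := fun τ =>
    (maxCum_le_upper hX S τ).trans (min_le_left _ _)
  have hFd : ∀ τ, F τ ≤ X * (M.bufCap + cnt M.d S τ) := fun τ =>
    (maxCum_le_upper hX S τ).trans (min_le_right _ _)
  have hFl : ∀ τ, X * cnt M.d S τ ≤ F τ := le_maxCum hX h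
  have hFB : ∀ τ, F (τ + 1) - F τ ≤ M.B (τ + 1) := by
    intro τ
    have : F (τ + 1) ≤ F τ + M.B (τ + 1) := min_le_left _ _
    linarith
  set c : ℕ → ℕ → ℝ := fun i τ => if i ∈ S then fifo X (F τ) (rk S i) else 0 with hc
  have hct : ∀ i τ, τ < M.t i → c i τ = 0 := by
    intro i τ hτ
    simp only [hc]
    split_ifs with hi
    · apply fifo_eq_zero hX
      have h1 : (cnt M.t S τ : ℝ) ≤ rk S i := by exact_mod_cast cnt_le_rk M.tmono hτ
      calc F τ ≤ X * cnt M.t S τ := hFt τ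
        _ ≤ X * rk S i := by gcongr
        _ = _ := mul_comm _ _
    · rfl
  have hcd : ∀ i τ, M.d i ≤ τ → c i τ = if i ∈ S then X else 0 := by
    intro i τ hτ
    simp only [hc]
    split_ifs with hi
    · apply fifo_eq_self hX
      have h1 : ((rk S i : ℝ) + 1) ≤ cnt M.d S τ := by exact_mod_cast rk_lt_cnt M.dmono hi hτ
      calc ((rk S i : ℝ) + 1) * X ≤ cnt M.d S τ * X := by gcongr
        _ = X * cnt M.d S τ := mul_comm _ _
        _ ≤ F τ := hFl τ
    · rfl
  have hcm : ∀ i, Monotone (c i) := by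
    intro i a b hab
    simp only [hc]
    split_ifs
    · exact fifo_mono (hFm hab) _
    · exact le_rfl
  have hc0 : ∀ i, c i 0 = 0 := fun i => hct i 0 (M.ht i)
  have hcsum : ∀ i τ, ∑ j ∈ Icc 1 τ, (c i j - c i (j - 1)) = c i τ := by
    intro i τ
    induction τ with
    | zero => simp [hc0]
    | succ τ ih => rw [sum_Icc_succ_top (by omega), ih]; simp
  have hctot : ∀ τ, ∑ i ∈ Icc 1 M.C, c i τ = F τ := by
    intro τ
    rw [← sum_subset hS (fun i _ hi => by simp [hc, hi])]
    calc ∑ i ∈ S, c i τ = ∑ i ∈ S, fifo X (F τ) (rk S i) :=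
          sum_congr rfl fun i hi => by simp [hc, hi]
      _ = min (F τ) (#S * X) := by
          rw [sum_rk (fun r => fifo X (F τ) r) S, sum_fifo hX (hFn τ)]
      _ = F τ := by
          apply min_eq_left
          have h1 : (cnt M.t S τ : ℝ) ≤ #S := by exact_mod_cast cnt_le_card M.t S τ
          calc F τ ≤ X * cnt M.t S τ := hFt τ
            _ ≤ X * #S := by gcongr
            _ = _ := mul_comm _ _
  -- For `j = 0` the difference vanishes, since `j - 1 = 0` in `ℕ`.
  refine ⟨fun i j => c i j - c i (j - 1), ?_, ?_, ?_, ?_, ?_⟩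
  · intro i j
    exact sub_nonneg.2 (hcm i (Nat.sub_le j 1))
  · rintro i j (hj | hj)
    · simp only
      rw [hct i j hj, hct i (j - 1) (by omega), sub_zero]
    · simp only
      rw [hcd i j hj.le, hcd i (j - 1) (by omega), sub_self]
  · intro i _
    simp only
    rw [hcsum, hcd i _ le_rfl]
  · intro j
    rw [sum_sub_distrib, hctot, hctot]
    cases j with
    | zero => simpa using M.hB 0
    | succ j => simpa using hFB j
  · intro τ
    rw [buffer_iff]
    simp only [hcsum]
    have hsub : #{i ∈ Icc 1 M.C | τ < M.d i ∧ 0 < c i τ} + cnt M.d S τ ≤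
        M.bufCap + cnt M.d S τ := by
      refine le_trans ?_ (card_rk_lt S (M.bufCap + cnt M.d S τ))
      unfold cnt
      rw [← card_union_of_disjoint]
      · apply card_le_card
        intro i hi
        rw [mem_union, mem_filter, mem_filter] at hi
        rw [mem_filter]
        rcases hi with ⟨-, -, hpos⟩ | ⟨hi, hd⟩
        · have hiS : i ∈ S := by
            by_contra hi
            simp [hc, hi] at hpos
          refine ⟨hiS, ?_⟩
          by_contra hlt
          have h1 : ((M.bufCap : ℝ) + cnt M.d S τ) ≤ rk S i := by exact_mod_cast not_lt.1 hlt
          have h2 : F τ ≤ rk S i * X := by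
            calc F τ ≤ X * (M.bufCap + cnt M.d S τ) := hFd τ
              _ ≤ X * rk S i := by gcongr
              _ = _ := mul_comm _ _
          simp [hc, hiS, fifo_eq_zero hX h2] at hpos
        · exact ⟨hi, (rk_lt_cnt M.dmono hi hd).trans_le (Nat.le_add_left _ _)⟩
      · rw [disjoint_left]
        intro i hi hi'
        rw [mem_filter] at hi hi'
        omega
    omega

lemma feasible_mono {S T : Finset ℕ} (hST : S ⊆ T)
    (h : M.FeasibleSet X T) : M.FeasibleSet X S := by
  obtain ⟨z, hz0, hzw, hzX, hzB, hzbuf⟩ := h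
  have hle : ∀ i j, (if i ∈ S then z i j else 0) ≤ z i j := by
    intro i j
    split_ifs
    · exact le_rfl
    · exact hz0 i j
  refine ⟨fun i j => if i ∈ S then z i j else 0, ?_, ?_, ?_, ?_, ?_⟩
  · intro i j
    simp only
    split_ifs
    · exact hz0 i j
    · exact le_rfl
  · intro i j hj
    simp [hzw i j hj]
  · intro i hi
    by_cases hiS : i ∈ S
    · simpa [hiS, hST hiS] using hzX i hi
    · simp [hiS]
  · intro j
    exact (sum_le_sum fun i _ => hle i j).trans (hzB j)
  · intro τ
    refine le_trans ?_ (hzbuf τ)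
    have := M.hL
    gcongr with i hi _ j
    exact hle i j

/-! ### The exchange argument -/

lemma cnt_insert_union {f : ℕ → ℕ} {x : ℕ} {A T : Finset ℕ} (hA : x ∉ A) (hT : x ∉ T)
    (hAT : Disjoint A T) (τ : ℕ) :
    cnt f (insert x (A ∪ T)) τ = cnt f A τ + cnt f T τ + if f x ≤ τ then 1 else 0 := by
  unfold cnt
  rw [card_filter, sum_insert (by simp [hA, hT]), sum_union hAT, card_filter, card_filter]
  ring

lemma cnt_eq_card {f : ℕ → ℕ} (hf : Monotone f) {s τ : ℕ} {A : Finset ℕ}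
    (hA : ∀ x ∈ A, x < s) (h : f s ≤ τ) : cnt f A τ = #A := by
  unfold cnt
  rw [filter_true_of_mem]
  exact fun x hx => (hf (hA x hx).le).trans h

lemma cnt_eq_zero {f : ℕ → ℕ} (hf : Monotone f) {g τ : ℕ} {T : Finset ℕ}
    (hT : ∀ x ∈ T, g < x) (h : τ < f g) : cnt f T τ = 0 := by
  unfold cnt
  rw [card_eq_zero, filter_eq_empty_iff]
  intro x hx
  have := hf (hT x hx).le
  omega

lemma cumB_mono : Monotone M.cumB := by
  apply monotone_nat_of_le_succ
  intro τ
  rw [cumB_succ]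
  linarith [M.hB (τ + 1)]

/-- Replacing `s` by the larger chunk `g` preserves the Hall condition, when no other chunk of the
set lies between them and `g` is compatible with the chunks `T` above it. An inequality whose
right-hand side drops concerns a slot `a` by which all of `A` and nothing of `{g} ∪ T` counts; it
then follows from the inequality for `{g} ∪ T`, since `A` adds at most `#A` to the left-hand side
and exactly `#A` to the right-hand side (in units of `X`). -/
lemma hall_exchange (hX : 0 < X) {A T : Finset ℕ} {s g : ℕ} (hsg : s < g)
    (hA : ∀ x ∈ A, x < s) (hT : ∀ x ∈ T, g < x)
    (h1 : M.HallCond X (insert s (A ∪ T))) (h2 : M.HallCond X (insert g T)) :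
    M.HallCond X (insert g (A ∪ T)) := by
  have hsA : s ∉ A := fun h => lt_irrefl _ (hA s h)
  have hgT : g ∉ T := fun h => lt_irrefl _ (hT g h)
  have hgA : g ∉ A := fun h => (hA g h).not_gt hsg
  have hsT : s ∉ T := fun h => (hT s h).not_gt hsg
  have hAT : Disjoint A T := by
    rw [disjoint_left]
    intro x hx hx'
    have := hA x hx
    have := hT x hx'
    omega
  have hG : ∀ f τ, cnt f (insert g T) τ = cnt f T τ + if f g ≤ τ then 1 else 0 := by
    intro f τ
    have := cnt_insert_union (f := f) (notMem_empty g) hgT (disjoint_empty_left T) τ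
    simpa [cnt] using this
  intro a b hab
  obtain ⟨h1t, h1d⟩ := h1 a b hab
  obtain ⟨h2t, h2d⟩ := h2 a b hab
  have hB : 0 ≤ M.cumB b - M.cumB a := sub_nonneg.2 (cumB_mono hab)
  have htsg := M.tmono hsg.le
  have hdsg := M.dmono hsg.le
  rw [cnt_insert_union hsA hsT hAT, cnt_insert_union hsA hsT hAT] at h1t h1d
  rw [hG, hG] at h2t h2d
  rw [cnt_insert_union hgA hgT hAT, cnt_insert_union hgA hgT hAT, cnt_insert_union hgA hgT hAT]
  -- The left-hand side never increases.
  have hlhs : (if M.d g ≤ b then 1 else 0 : ℕ) ≤ if M.d s ≤ b then 1 else 0 := by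
    split_ifs <;> omega
  constructor
  · by_cases hc : M.t s ≤ a ∧ a < M.t g
    · have e1 := cnt_eq_card M.tmono hA hc.1
      have e2 := cnt_eq_zero M.tmono hT hc.2
      have e3 : cnt M.d A b ≤ #A := cnt_le_card _ _ _
      rw [if_neg (not_le.2 hc.2), e2] at h2t ⊢
      rw [e1]
      have e3' : (cnt M.d A b : ℝ) ≤ #A := by exact_mod_cast e3
      have e4 := mul_le_mul_of_nonneg_left e3' hX.le
      push_cast at h2t ⊢
      linarith
    · have hr : (if M.t g ≤ a then 1 else 0 : ℕ) = if M.t s ≤ a then 1 else 0 := by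
        split_ifs <;> omega
      rw [hr]
      refine le_trans ?_ h1t
      have : ((cnt M.d A b + cnt M.d T b + if M.d g ≤ b then 1 else 0 : ℕ) : ℝ) ≤
          ((cnt M.d A b + cnt M.d T b + if M.d s ≤ b then 1 else 0 : ℕ) : ℝ) := by
        exact_mod_cast Nat.add_le_add_left hlhs _
      gcongr
  · by_cases hc : M.d s ≤ a ∧ a < M.d g
    · have e1 := cnt_eq_card M.dmono hA hc.1
      have e2 := cnt_eq_zero M.dmono hT hc.2
      have e3 : cnt M.d A b ≤ #A := cnt_le_card _ _ _
      rw [if_neg (not_le.2 hc.2), e2] at h2d ⊢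
      rw [e1]
      have e3' : (cnt M.d A b : ℝ) ≤ #A := by exact_mod_cast e3
      have e4 := mul_le_mul_of_nonneg_left e3' hX.le
      push_cast at h2d ⊢
      linarith
    · have hr : (if M.d g ≤ a then 1 else 0 : ℕ) = if M.d s ≤ a then 1 else 0 := by
        split_ifs <;> omega
      rw [hr]
      refine le_trans ?_ h1d
      have : ((cnt M.d A b + cnt M.d T b + if M.d g ≤ b then 1 else 0 : ℕ) : ℝ) ≤
          ((cnt M.d A b + cnt M.d T b + if M.d s ≤ b then 1 else 0 : ℕ) : ℝ) := by
        exact_mod_cast Nat.add_le_add_left hlhs _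
      gcongr

/-! ### Optimality of the greedy selection on every final segment -/

lemma aux_succ (k : ℕ) : M.backGreedyAux X (k + 1) =
    if M.FeasibleSet X (insert (M.C - k) (M.backGreedyAux X k)) then
      insert (M.C - k) (M.backGreedyAux X k) else M.backGreedyAux X k := rfl

lemma aux_subset {k : ℕ} (hk : k ≤ M.C) : M.backGreedyAux X k ⊆ Ioc (M.C - k) M.C := by
  induction k with
  | zero => simp [backGreedyAux]
  | succ k ih =>
    have h := ih (by omega)
    have h' : M.backGreedyAux X k ⊆ Ioc (M.C - (k + 1)) M.C :=
      h.trans (Ioc_subset_Ioc_left (by omega))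
    rw [aux_succ]
    split_ifs
    · rw [insert_subset_iff]
      exact ⟨by rw [mem_Ioc]; omega, h'⟩
    · exact h'

lemma aux_filter {k l : ℕ} (hkl : k ≤ l) (hl : l ≤ M.C) :
    {i ∈ M.backGreedyAux X l | M.C - k < i} = M.backGreedyAux X k := by
  induction l, hkl using Nat.le_induction with
  | base =>
    apply filter_true_of_mem
    intro i hi
    exact (mem_Ioc.1 (aux_subset hl hi)).1
  | succ l hkl ih =>
    have h := ih (by omega)
    rw [aux_succ]
    split_ifs
    · rw [filter_insert, if_neg (by omega), h]
    · exact h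

/-- A feasible subset of `(m, C]` can be made to agree with the greedy selection on the last `k`
chunks without leaving `(m, C]` and without losing chunks. -/
lemma exists_agree (hX : 0 < X) {m k : ℕ} (hk : k + m ≤ M.C) {S : Finset ℕ}
    (hS : S ⊆ Ioc m M.C) (hf : M.FeasibleSet X S) :
    ∃ S' ⊆ Ioc m M.C, M.FeasibleSet X S' ∧ #S ≤ #S' ∧
      {i ∈ S' | M.C - k < i} = M.backGreedyAux X k := by
  have hIoc : Ioc m M.C ⊆ Icc 1 M.C := by
    intro i
    simp only [mem_Ioc, mem_Icc]
    omega
  induction k with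
  | zero =>
    refine ⟨S, hS, hf, le_rfl, ?_⟩
    rw [backGreedyAux, filter_eq_empty_iff]
    intro i hi
    have := mem_Ioc.1 (hS hi)
    omega
  | succ k ih =>
    obtain ⟨R, hR, hRf, hcard, hag⟩ := ih (by omega)
    set g := M.C - k with hg
    have hg' : M.C - (k + 1) = g - 1 := by omega
    have hg1 : m < g := by omega
    have hgC : g ≤ M.C := by omega
    have hlt : ∀ i, g - 1 < i ↔ i = g ∨ g < i := by omega
    have hfil : ∀ Q : Finset ℕ, {i ∈ Q | g - 1 < i} =
        if g ∈ Q then insert g {i ∈ Q | g < i} else {i ∈ Q | g < i} := by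
      intro Q
      ext i
      split_ifs with h
      · simp only [mem_filter, mem_insert, hlt]
        constructor
        · rintro ⟨h1, h2 | h2⟩
          · exact Or.inl h2
          · exact Or.inr ⟨h1, h2⟩
        · rintro (rfl | h1)
          · exact ⟨h, Or.inl rfl⟩
          · exact ⟨h1.1, Or.inr h1.2⟩
      · simp only [mem_filter, hlt]
        constructor
        · rintro ⟨h1, rfl | h2⟩
          · exact absurd h1 h
          · exact ⟨h1, h2⟩
        · rintro ⟨h1, h2⟩
          exact ⟨h1, Or.inr h2⟩
    rw [aux_succ, hg', ← hg]
    by_cases hgR : g ∈ R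
    · have hins : insert g (M.backGreedyAux X k) ⊆ R := by
        rw [insert_subset_iff, ← hag]
        exact ⟨hgR, filter_subset _ _⟩
      rw [if_pos (feasible_mono hins hRf)]
      exact ⟨R, hR, hRf, hcard, by rw [hfil, if_pos hgR, hag]⟩
    · by_cases hfe : M.FeasibleSet X (insert g (M.backGreedyAux X k))
      · rw [if_pos hfe]
        set T := M.backGreedyAux X k with hTdef
        have hT : ∀ x ∈ T, g < x := by
          intro x hx
          rw [← hag] at hx
          exact (mem_filter.1 hx).2
        have hTR : T ⊆ R := hag ▸ filter_subset _ _
        have hTI : insert g T ⊆ Ioc m M.C := by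
          rw [insert_subset_iff, mem_Ioc]
          exact ⟨⟨hg1, hgC⟩, hTR.trans hR⟩
        have hgT : g ∉ T := fun h => hgR (hTR h)
        have hTfil : {i ∈ T | g < i} = T := filter_true_of_mem hT
        by_cases hne : {i ∈ R | i < g}.Nonempty
        · set s := {i ∈ R | i < g}.max' hne with hs
          have hsm := max'_mem _ hne
          rw [← hs, mem_filter] at hsm
          set A := {i ∈ R | i < s} with hAdef
          have hA : ∀ x ∈ A, x < s := fun x hx => (mem_filter.1 hx).2
          have hReq : R = insert s (A ∪ T) := by
            ext i
            simp only [mem_insert, mem_union, hAdef, ← hag, mem_filter]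
            constructor
            · intro hi
              rcases lt_trichotomy i g with h | h | h
              · have : i ≤ s := le_max' _ i (mem_filter.2 ⟨hi, h⟩)
                rcases this.lt_or_eq with h' | h'
                · exact Or.inr (Or.inl ⟨hi, h'⟩)
                · exact Or.inl h'
              · exact absurd (h ▸ hi) hgR
              · exact Or.inr (Or.inr ⟨hi, h⟩)
            · rintro (h | h | h)
              · exact h ▸ hsm.1
              · exact h.1
              · exact h.1
          have hAg : ∀ x ∈ A, ¬ g < x := fun x hx => by have := hA x hx; omega
          have hsub : insert g (A ∪ T) ⊆ Ioc m M.C := by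
            rw [insert_subset_iff, union_subset_iff, mem_Ioc]
            exact ⟨⟨hg1, hgC⟩, (filter_subset _ _).trans hR, hTR.trans hR⟩
          refine ⟨insert g (A ∪ T), hsub, ?_, ?_, ?_⟩
          · apply feasible_of_hall hX (hsub.trans hIoc)
            apply hall_exchange hX hsm.2 hA hT
            · rw [← hReq]
              exact hall_of_feasible hX (hR.trans hIoc) hRf
            · exact hall_of_feasible hX (hTI.trans hIoc) hfe
          · refine hcard.trans ?_
            have hgAT : g ∉ A ∪ T := by
              rw [mem_union, not_or]
              exact ⟨fun h => hgR (mem_filter.1 h).1, hgT⟩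
            rw [card_insert_of_notMem hgAT, hReq]
            exact card_insert_le _ _
          · rw [hfil, if_pos (mem_insert_self _ _), filter_insert, if_neg (lt_irrefl g),
              filter_union, hTfil, filter_false_of_mem hAg, empty_union]
        · refine ⟨insert g T, hTI, hfe, ?_, ?_⟩
          · refine hcard.trans (card_le_card ?_)
            intro i hi
            have h1 : ¬ i < g := fun h => hne ⟨i, mem_filter.2 ⟨hi, h⟩⟩
            have h2 : i ≠ g := fun h => hgR (h ▸ hi)
            rw [← hag, mem_insert, mem_filter]
            exact Or.inr ⟨hi, by omega⟩
          · rw [hfil, if_pos (mem_insert_self _ _), filter_insert, if_neg (lt_irrefl g), hTfil]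
      · rw [if_neg hfe]
        exact ⟨R, hR, hRf, hcard, by rw [hfil, if_neg hgR, hag]⟩

lemma card_tail_le (hX : 0 < X) {S : Finset ℕ} (hS : S ⊆ Icc 1 M.C) (hf : M.FeasibleSet X S)
    {m : ℕ} (hm : m ≤ M.C) : #{i ∈ S | m < i} ≤ #{i ∈ M.backGreedy X | m < i} := by
  have hsub : {i ∈ S | m < i} ⊆ Ioc m M.C := by
    intro i hi
    rw [mem_filter] at hi
    exact mem_Ioc.2 ⟨hi.2, (mem_Icc.1 (hS hi.1)).2⟩
  obtain ⟨R, hR, -, hcard, hag⟩ := exists_agree hX (m := m) (k := M.C - m) (by omega) hsub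
    (feasible_mono (filter_subset _ _) hf)
  have hmm : M.C - (M.C - m) = m := by omega
  have h1 := aux_filter (M := M) (X := X) (Nat.sub_le M.C m) le_rfl
  rw [hmm] at h1 hag
  rw [filter_true_of_mem fun i hi => (mem_Ioc.1 (hR hi)).1] at hag
  rw [backGreedy, h1, ← hag]
  exact hcard

end SchedModel

/-- Skipped chunks up to `v`, counted through the selected chunks beyond `v`. -/
lemma card_skips {C v : ℕ} (hv : v ≤ C) {S : Finset ℕ} (hS : S ⊆ Icc 1 C) :
    #{x ∈ Icc 1 C \ S | x ≤ v} + #S = v + #{i ∈ S | v < i} := by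
  have h1 : #{i ∈ S | v < i} + #{i ∈ S | ¬ v < i} = #S := card_filter_add_card_filter_not _
  have h2 : #{x ∈ Icc 1 C \ S | x ≤ v} + #{i ∈ S | ¬ v < i} = v := by
    rw [← card_union_of_disjoint]
    · have : {x ∈ Icc 1 C \ S | x ≤ v} ∪ {i ∈ S | ¬ v < i} = Icc 1 v := by
        ext i
        simp only [mem_union, mem_filter, mem_sdiff, mem_Icc]
        have := @hS i
        rw [mem_Icc] at this
        by_cases hi : i ∈ S
        · have := this hi
          simp only [hi, not_true_eq_false, and_false, true_and, false_and, false_or]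
          omega
        · simp only [hi, not_false_eq_true, and_true, false_and, or_false]
          omega
      rw [this]
      simp
    · rw [disjoint_left]
      intro i hi hi'
      exact (mem_sdiff.1 (mem_filter.1 hi).1).2 (mem_filter.1 hi').1
  omega

/-- the backward greedy pushes all skips toward lower-index chunks:
if `S` is feasible with `|S| = |G|` and `i_1 < … < i_H` (resp. `j_1 < … < j_H`) are
the chunks skipped by the backward greedy `G` (resp. by `S`), then `i_k ≤ j_k` for
every `k`. -/
theorem backward_greedy_skips_earliest (M : SchedModel) (X : ℝ) (hX : 0 < X)
    (S : Finset ℕ) (hS : S ⊆ Finset.Icc 1 M.C) (hfeas : M.FeasibleSet X S)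
    (hcard : S.card = (M.backGreedy X).card) (H : ℕ)
    (hG : ((Finset.Icc 1 M.C) \ M.backGreedy X).card = H)
    (hS' : ((Finset.Icc 1 M.C) \ S).card = H) :
    ∀ k : Fin H,
      ((((Finset.Icc 1 M.C) \ M.backGreedy X).orderIsoOfFin hG k : ℕ)) ≤
        ((((Finset.Icc 1 M.C) \ S).orderIsoOfFin hS' k : ℕ)) := by
  have hGs : M.backGreedy X ⊆ Finset.Icc 1 M.C := by
    intro i hi
    have := Finset.mem_Ioc.1 (SchedModel.aux_subset le_rfl hi)
    exact Finset.mem_Icc.2 ⟨by omega, this.2⟩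
  apply orderIso_le hG hS'
  intro v hv
  have hvC : v ≤ M.C := (Finset.mem_Icc.1 (Finset.mem_sdiff.1 hv).1).2
  have h1 := card_skips hvC hS
  have h2 := card_skips hvC hGs
  have h3 := SchedModel.card_tail_le hX hS hfeas hvC
  omega
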